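/- If σ satisfies the Lorentz algebra relations, then for all α, β ∈ Fin n one has the fully contracted identity Σ_{μ,ν} ḡ_{μν}·[σ^{μα}, σ^{νβ}] = (2−n)·σ^{αβ}, where the sum is over μ, ν ∈ Fin n. -/

import Mathlib

/-!
Expanding the commutator `[σ^{μα}, σ^{νβ}]` by the Lorentz relations gives four terms. Contracted
with the inverse metric, the first and last collapse by `ḡ g = 1` and `g ḡ = 1` to `σ^{αβ}` and
`-σ^{βα} = σ^{αβ}`, the second gives `-tr(ḡ g) σ^{αβ} = -n σ^{αβ}`, and the third is proportional
to `∑ ḡ_{μν} σ^{νμ}`, which vanishes since `ḡ` is symmetric and `σ` antisymmetric.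
-/


open Matrix BigOperators

/-- The inverse of a symmetric array is symmetric: its transpose is a left inverse, hence equals
the right inverse. -/
lemma ginv_symm {n : ℕ} {g ginv : Fin n → Fin n → ℂ}
    (hg_symm : ∀ μ ν, g μ ν = g ν μ)
    (hg_inv : ∀ μ ν, ∑ κ, g μ κ * ginv κ ν = if μ = ν then (1 : ℂ) else 0) (μ ν : Fin n) :
    ginv μ ν = ginv ν μ := by
  have hR : Matrix.of g * Matrix.of ginv = 1 := by
    ext i j
    simpa [Matrix.mul_apply, Matrix.one_apply] using hg_inv i j
  have hG : (Matrix.of g)ᵀ = Matrix.of g := by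
    ext i j
    exact hg_symm j i
  have hL : (Matrix.of ginv)ᵀ * Matrix.of g = 1 := by
    conv_lhs => rw [← hG]
    rw [← Matrix.transpose_mul, hR, Matrix.transpose_one]
  have h : (Matrix.of ginv)ᵀ = Matrix.of ginv := left_inv_eq_right_inv hL hR
  exact congrFun (congrFun h ν) μ

/-- A symmetric array contracted with an antisymmetric one vanishes. -/
lemma contract_eq_zero {n N : ℕ} {s : Fin n → Fin n → ℂ}
    {σ : Fin n → Fin n → Matrix (Fin N) (Fin N) ℂ}
    (hs : ∀ μ ν, s μ ν = s ν μ) (hσ : ∀ α β, σ α β = - σ β α) :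
    ∑ μ, ∑ ν, s μ ν • σ ν μ = 0 := by
  have h : ∑ μ, ∑ ν, s μ ν • σ ν μ = - ∑ μ, ∑ ν, s μ ν • σ ν μ := by
    conv_lhs => rw [Finset.sum_comm]
    simp only [← Finset.sum_neg_distrib]
    refine Finset.sum_congr rfl fun μ _ => Finset.sum_congr rfl fun ν _ => ?_
    rw [hs ν μ, hσ μ ν, smul_neg]
  ext i j
  exact self_eq_neg.mp (congrFun (congrFun h i) j)

theorem stmt_10
    (n N : ℕ) (hn : 1 ≤ n) (hN : 1 ≤ N)
    (g ginv : Fin n → Fin n → ℂ)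
    (hg_symm : ∀ μ ν, g μ ν = g ν μ)
    (hg_inv : ∀ μ ν, ∑ κ, g μ κ * ginv κ ν = if μ = ν then (1 : ℂ) else 0)
    (hg_inv' : ∀ μ ν, ∑ κ, ginv μ κ * g κ ν = if μ = ν then (1 : ℂ) else 0)
    (σ : Fin n → Fin n → Matrix (Fin N) (Fin N) ℂ)
    (hσ_anti : ∀ α β, σ α β = - σ β α)
    (hLorentz : ∀ α β μ ν, σ α β * σ μ ν - σ μ ν * σ α β =
      g μ β • σ α ν - g μ α • σ β ν + g ν β • σ μ α - g ν α • σ μ β) :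
    ∀ α β : Fin n,
      ∑ μ, ∑ ν, ginv μ ν • (σ μ α * σ ν β - σ ν β * σ μ α) =
        ((2 : ℂ) - n) • σ α β := by
  intro α β
  have h1 : ∑ μ, ∑ ν, (ginv μ ν * g ν α) • σ μ β = σ α β := by
    simp [← Finset.sum_smul, hg_inv']
  have h2 : ∑ μ, ∑ ν, (ginv μ ν * g ν μ) • σ α β = (n : ℂ) • σ α β := by
    simp_rw [← Finset.sum_smul, hg_inv']
    simp
  have h3 : ∑ μ, ∑ ν, (ginv μ ν * g β α) • σ ν μ = 0 :=
    contract_eq_zero (s := fun μ ν => ginv μ ν * g β α)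
      (fun μ ν => by rw [ginv_symm hg_symm hg_inv μ ν]) hσ_anti
  have h4 : ∑ μ, ∑ ν, (ginv μ ν * g β μ) • σ ν α = σ β α := by
    rw [Finset.sum_comm]
    simp [← Finset.sum_smul, mul_comm (ginv _ _), hg_inv]
  simp only [hLorentz, smul_sub, smul_add, smul_smul, Finset.sum_sub_distrib,
    Finset.sum_add_distrib]
  rw [h1, h2, h3, h4, hσ_anti β α, sub_smul, two_smul]
  abel
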